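/- arXiv:2301.09044 — 8 statements merged into one kernel-verified Lean document; each statement's English description precedes it below -/
import Mathlib

section
/- Let φ, ψ : ℝ → ℝ be nonnegative functions satisfying 𝟙[v ≥ 0] ≤ φ(v) and 𝟙[v ≥ 0] ≤ ψ(v) for all v ∈ ℝ. Then for every c ∈ (0,1), α, β > 0, t ∈ ℝ and a ∈ {−1, +1}, the induced rejection loss satisfies 𝟙[a = −1]·𝟙[t > 0] + c·𝟙[t ≤ 0] ≤ φ(α(t − a)/2) + c·ψ(−β t). -/
/-- The induced rejection loss `ℓ₂(t, a) = 𝟙[a = −1]·𝟙[t > 0] + c·𝟙[t ≤ 0]`. -/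
noncomputable def inducedRejectionLoss (c t a : ℝ) : ℝ :=
  (if a = -1 then (1 : ℝ) else 0) * (if 0 < t then (1 : ℝ) else 0) +
    c * (if t ≤ 0 then (1 : ℝ) else 0)

/-- any pair of nonnegative functions upper-bounding the indicator
`𝟙[v ≥ 0]` yields an upper bound on the induced rejection loss. -/
theorem general_surrogate_upper_bounds_induced (φ ψ : ℝ → ℝ)
    (hφ_nonneg : ∀ v : ℝ, 0 ≤ φ v) (hψ_nonneg : ∀ v : ℝ, 0 ≤ ψ v)
    (hφ : ∀ v : ℝ, (if 0 ≤ v then (1 : ℝ) else 0) ≤ φ v)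
    (hψ : ∀ v : ℝ, (if 0 ≤ v then (1 : ℝ) else 0) ≤ ψ v)
    (c α β t a : ℝ) (hc : 0 < c) (hc1 : c < 1) (hα : 0 < α) (hβ : 0 < β)
    (ha : a = -1 ∨ a = 1) :
    inducedRejectionLoss c t a ≤ φ (α * (t - a) / 2) + c * ψ (-β * t) := by
  have h1 := hφ_nonneg (α * (t - a) / 2)
  have h2 := hψ_nonneg (-β * t)
  have h3 := hφ (α * (t - a) / 2)
  have h4 := hψ (-β * t)
  have h5 : 0 ≤ c * ψ (-β * t) := mul_nonneg hc.le h2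
  unfold inducedRejectionLoss
  rcases lt_or_ge 0 t with ht | ht
  · rw [if_pos ht, if_neg (not_le.mpr ht)]
    by_cases h : a = -1
    · have hp : 0 ≤ α * (t - a) / 2 := by
        have : 0 ≤ t - a := by linarith
        positivity
      rw [if_pos hp] at h3
      rw [if_pos h]
      linarith
    · rw [if_neg h]
      linarith
  · rw [if_neg (not_lt.mpr ht), if_pos ht]
    have hp : 0 ≤ -β * t := by nlinarith
    rw [if_pos hp] at h4
    have := mul_le_mul_of_nonneg_left h4 hc.le
    linarith
end

section
/- For every c ∈ (0,1), α, β > 0 and η ∈ [0,1], the infimum over t ∈ ℝ of C₁(t, η) equals (1/(1 − γ))·(2βc/α)^γ·I_η^{1−γ}, where γ = α/(α + 2β) and I_η = η·exp(−α/2) + (1 − η)·exp(α/2). -/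
/-- The surrogate rejection loss `ℓ₁(t, a) = exp(α(t − a)/2) + c·exp(−β t)`. -/
noncomputable def surrogateRejectionLoss (c α β t a : ℝ) : ℝ :=
  Real.exp (α * (t - a) / 2) + c * Real.exp (-β * t)

/-- The conditional risk of the surrogate rejection loss:
`C₁(t, η) = η·ℓ₁(t, +1) + (1 − η)·ℓ₁(t, −1)`. -/
noncomputable def condRiskSurrogate (c α β t η : ℝ) : ℝ :=
  η * surrogateRejectionLoss c α β t 1 + (1 - η) * surrogateRejectionLoss c α β t (-1)

/-- `I_η = η·exp(−α/2) + (1 − η)·exp(α/2)`. -/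
noncomputable def Ieta (α η : ℝ) : ℝ :=
  η * Real.exp (-α / 2) + (1 - η) * Real.exp (α / 2)

/-- the infimum over `t ∈ ℝ` of `C₁(t, η)` equals
`(1/(1 − γ))·(2βc/α)^γ·I_η^{1−γ}` with `γ = α/(α + 2β)`. -/
theorem condRiskSurrogate_inf (c α β η : ℝ)
    (hc : 0 < c) (hc1 : c < 1) (hα : 0 < α) (hβ : 0 < β)
    (hη : η ∈ Set.Icc (0 : ℝ) 1) :
    IsGLB (Set.range fun t => condRiskSurrogate c α β t η)
      ((1 / (1 - α / (α + 2 * β))) * (2 * β * c / α) ^ (α / (α + 2 * β)) *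
        Ieta α η ^ (1 - α / (α + 2 * β))) := by
  obtain ⟨h0, h1⟩ := hη
  have hs : 0 < α + 2 * β := by positivity
  have hI : 0 < Ieta α η := by
    unfold Ieta
    have e1 := Real.exp_pos (-α / 2)
    have e2 : Real.exp (-α / 2) ≤ Real.exp (α / 2) := Real.exp_le_exp.mpr (by linarith)
    nlinarith
  have hA : 0 < 2 * β * c / α := by positivity
  have hrisk : ∀ t, condRiskSurrogate c α β t η
      = Ieta α η * Real.exp (α * t / 2) + c * Real.exp (-β * t) := by
    intro t
    unfold condRiskSurrogate surrogateRejectionLoss Ieta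
    have e1 : Real.exp (α * (t - 1) / 2) = Real.exp (-α / 2) * Real.exp (α * t / 2) := by
      rw [← Real.exp_add]; congr 1; ring
    have e2 : Real.exp (α * (t - -1) / 2) = Real.exp (α / 2) * Real.exp (α * t / 2) := by
      rw [← Real.exp_add]; congr 1; ring
    rw [e1, e2]; ring
  have hc' : c = α / (2 * β) * (2 * β * c / α) := by field_simp
  generalize 2 * β * c / α = A at hA hc' ⊢
  generalize Ieta α η = I at hI hrisk ⊢
  obtain ⟨a, rfl⟩ : ∃ a, A = Real.exp a := ⟨Real.log A, (Real.exp_log hA).symm⟩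
  obtain ⟨b, rfl⟩ : ∃ b, I = Real.exp b := ⟨Real.log I, (Real.exp_log hI).symm⟩
  obtain ⟨t0, ht0⟩ : ∃ t0, t0 = 2 * (a - b) / (α + 2 * β) := ⟨_, rfl⟩
  obtain ⟨K, hK⟩ : ∃ K, K = Real.exp (b + α * t0 / 2) := ⟨_, rfl⟩
  have hKpos : 0 < K := hK ▸ Real.exp_pos _
  have hval : (1 / (1 - α / (α + 2 * β))) * Real.exp a ^ (α / (α + 2 * β)) *
        Real.exp b ^ (1 - α / (α + 2 * β)) = K * (1 + α / (2 * β)) := by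
    rw [← Real.exp_mul, ← Real.exp_mul, mul_assoc, ← Real.exp_add, hK, mul_comm]
    congr 1
    · congr 1
      rw [ht0]; field_simp; ring
    · have : 1 - α / (α + 2 * β) = 2 * β / (α + 2 * β) := by field_simp; ring
      rw [this]; field_simp; ring
  have hf : ∀ t, condRiskSurrogate c α β t η
      = K * (Real.exp (α * (t - t0) / 2) + α / (2 * β) * Real.exp (-β * (t - t0))) := by
    intro t
    have e1 : Real.exp b * Real.exp (α * t / 2) = K * Real.exp (α * (t - t0) / 2) := by
      rw [hK, ← Real.exp_add, ← Real.exp_add]; congr 1; ring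
    have e2 : Real.exp a * Real.exp (-β * t) = K * Real.exp (-β * (t - t0)) := by
      rw [hK, ← Real.exp_add, ← Real.exp_add]; congr 1
      rw [ht0]; field_simp; ring
    rw [hrisk, e1, hc', mul_assoc, e2]; ring
  rw [hval]
  apply IsLeast.isGLB
  constructor
  · refine ⟨t0, ?_⟩
    simp [hf]
  · rintro _ ⟨t, rfl⟩
    simp only [hf]
    apply mul_le_mul_of_nonneg_left _ hKpos.le
    have k1 := Real.add_one_le_exp (α * (t - t0) / 2)
    have k2 := mul_le_mul_of_nonneg_left (Real.add_one_le_exp (-β * (t - t0)))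
      (show 0 ≤ α / (2 * β) by positivity)
    have k3 : α / (2 * β) * (-β * (t - t0) + 1) = -(α * (t - t0) / 2) + α / (2 * β) := by
      field_simp
    linarith
end

section
/- Let c ∈ (0,1) and α, β > 0 satisfy 2βc/α = Ī_c, where Ī_c = c·exp(α/2) + (1 − c)·exp(−α/2). Then for every η ∈ [0,1], with t₀ = (2/(2β + α))·ln(2βc/(α·I_η)) the minimizer of C₁(·, η), the following are equivalent: t₀ > 0; 2βc/(α·I_η) > 1; I_η < Ī_c; and η > 1 − c. In particular, t₀ and η − (1 − c) always have the same sign. -/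
/-- `Ī_c = c·exp(α/2) + (1 − c)·exp(−α/2)`. -/
noncomputable def Ibar (c α : ℝ) : ℝ :=
  c * Real.exp (α / 2) + (1 - c) * Real.exp (-α / 2)

/-- under the constraint `2βc/α = Ī_c`, with
`t₀ = (2/(2β + α))·ln(2βc/(α·I_η))` the minimizer of `C₁(·, η)`, the conditions
`t₀ > 0`, `2βc/(α·I_η) > 1`, `I_η < Ī_c` and `η > 1 − c` are all equivalent;
in particular `t₀` and `η − (1 − c)` always have the same sign. -/
theorem minimizer_sign_equivalences (c α β η : ℝ)
    (hc : 0 < c) (hc1 : c < 1) (hα : 0 < α) (hβ : 0 < β)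
    (hrel : 2 * β * c / α = Ibar c α)
    (hη : η ∈ Set.Icc (0 : ℝ) 1) :
    (0 < (2 / (2 * β + α)) * Real.log (2 * β * c / (α * Ieta α η)) ↔
      1 < 2 * β * c / (α * Ieta α η)) ∧
    (1 < 2 * β * c / (α * Ieta α η) ↔ Ieta α η < Ibar c α) ∧
    (Ieta α η < Ibar c α ↔ 1 - c < η) ∧
    (0 < (2 / (2 * β + α)) * Real.log (2 * β * c / (α * Ieta α η)) ↔
      0 < η - (1 - c)) ∧
    ((2 / (2 * β + α)) * Real.log (2 * β * c / (α * Ieta α η)) < 0 ↔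
      η - (1 - c) < 0) := by
  obtain ⟨h0, h1⟩ := hη
  have hlt : Real.exp (-α / 2) < Real.exp (α / 2) := Real.exp_lt_exp.mpr (by linarith)
  have he : 0 < Real.exp (-α / 2) := Real.exp_pos _
  have hI : 0 < Ieta α η := by
    unfold Ieta
    nlinarith [mul_nonneg (sub_nonneg.mpr h1) (sub_nonneg.mpr hlt.le)]
  have hdiff : Ibar c α - Ieta α η
      = (η - (1 - c)) * (Real.exp (α / 2) - Real.exp (-α / 2)) := by
    unfold Ieta Ibar; ring
  have hE : 0 < Real.exp (α / 2) - Real.exp (-α / 2) := sub_pos.mpr hlt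
  have hk : 0 < 2 / (2 * β + α) := by positivity
  have hq : 2 * β * c / (α * Ieta α η) = Ibar c α / Ieta α η := by
    rw [← hrel, div_div]
  have hpos : 0 < 2 * β * c / (α * Ieta α η) := by positivity
  have A : 0 < (2 / (2 * β + α)) * Real.log (2 * β * c / (α * Ieta α η)) ↔
      1 < 2 * β * c / (α * Ieta α η) := by
    rw [mul_pos_iff_of_pos_left hk, Real.log_pos_iff hpos.le]
  have B : 1 < 2 * β * c / (α * Ieta α η) ↔ Ieta α η < Ibar c α := by
    rw [hq, one_lt_div hI]
  have C : Ieta α η < Ibar c α ↔ 1 - c < η := by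
    rw [← sub_pos, hdiff, mul_pos_iff_of_pos_right hE, sub_pos]
  refine ⟨A, B, C, ?_, ?_⟩
  · rw [A, B, C, sub_pos]
  · have N : ∀ k x : ℝ, 0 < k → (k * x < 0 ↔ x < 0) := fun k x hk =>
      ⟨fun h => by by_contra hx; nlinarith [mul_nonneg hk.le (not_lt.mp hx)],
        fun h => mul_neg_of_pos_of_neg hk h⟩
    have D : Ibar c α < Ieta α η ↔ η - (1 - c) < 0 := by
      rw [← N _ _ hE, mul_comm, ← hdiff, sub_neg]
    rw [N _ _ hk, Real.log_neg_iff hpos, hq, div_lt_one hI, D]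
end

section
/- Let c ∈ (0,1) and α, β > 0 satisfy 2βc/α = Ī_c, where Ī_c = c·exp(α/2) + (1 − c)·exp(−α/2). Then for every η ∈ [0,1], the infimum of C₁(t, η) over the set {t ∈ ℝ : t·(η − (1 − c)) ≤ 0} is attained at t = 0 and equals C₁(0, η) = I_η + c. -/
/-- under the constraint `2βc/α = Ī_c`, the infimum of `C₁(t, η)` over
`{t : t·(η − (1 − c)) ≤ 0}` is attained at `t = 0` and equals `C₁(0, η) = I_η + c`. -/
theorem condRiskSurrogate_inf_mismatch_region (c α β η : ℝ)
    (hc : 0 < c) (hc1 : c < 1) (hα : 0 < α) (hβ : 0 < β)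
    (hrel : 2 * β * c / α = Ibar c α)
    (hη : η ∈ Set.Icc (0 : ℝ) 1) :
    IsLeast ((fun t => condRiskSurrogate c α β t η) ''
      {t : ℝ | t * (η - (1 - c)) ≤ 0}) (condRiskSurrogate c α β 0 η) ∧
    condRiskSurrogate c α β 0 η = Ieta α η + c := by
  have key : ∀ t, condRiskSurrogate c α β t η
      = Real.exp (α * t / 2) * Ieta α η + c * Real.exp (-β * t) := by
    intro t
    have h1 : Real.exp (α * (t - 1) / 2) = Real.exp (α * t / 2) * Real.exp (-α / 2) := by
      rw [← Real.exp_add]; congr 1; ring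
    have h2 : Real.exp (α * (t - -1) / 2) = Real.exp (α * t / 2) * Real.exp (α / 2) := by
      rw [← Real.exp_add]; congr 1; ring
    unfold condRiskSurrogate surrogateRejectionLoss Ieta
    rw [h1, h2]; ring
  have h0 : condRiskSurrogate c α β 0 η = Ieta α η + c := by
    rw [key]; simp
  refine ⟨⟨⟨0, by simp, rfl⟩, ?_⟩, h0⟩
  rintro _ ⟨t, ht, rfl⟩
  simp only [Set.mem_setOf_eq] at ht
  show condRiskSurrogate c α β 0 η ≤ condRiskSurrogate c α β t η
  rw [h0, key]
  have hI : 0 ≤ Ieta α η := by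
    unfold Ieta
    have := Real.exp_pos (-α / 2)
    have := Real.exp_pos (α / 2)
    have := hη.1
    have : 0 ≤ 1 - η := by linarith [hη.2]
    positivity
  have e1 := mul_le_mul_of_nonneg_right (Real.add_one_le_exp (α * t / 2)) hI
  have e2 := mul_le_mul_of_nonneg_left (Real.add_one_le_exp (-β * t)) hc.le
  have hb : β * c = α / 2 * Ibar c α := by
    rw [← hrel]; field_simp
  have hd : Ieta α η - Ibar c α
      = -(η - (1 - c)) * (Real.exp (α / 2) - Real.exp (-α / 2)) := by
    unfold Ieta Ibar; ring
  have hE : 0 ≤ Real.exp (α / 2) - Real.exp (-α / 2) :=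
    sub_nonneg.2 (Real.exp_le_exp.2 (by linarith))
  have hp : 0 ≤ α / 2 * (-(t * (η - (1 - c))) * (Real.exp (α / 2) - Real.exp (-α / 2))) :=
    mul_nonneg (by positivity) (mul_nonneg (by linarith) hE)
  have hq : α / 2 * (-(t * (η - (1 - c))) * (Real.exp (α / 2) - Real.exp (-α / 2)))
      = α * t / 2 * Ieta α η - t * (β * c) := by
    rw [hb]; linear_combination (-(α / 2 * t)) * hd
  linarith
end

section
/- For all real numbers x and r with 0 < x < 1 and 0 < r < 1, one has (1 + x)^r ≤ 1 + r·x + r·(r − 1)·x²/4. -/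
theorem bern_aux (x r : ℝ) (hx0 : 0 < x) (hx1 : x < 1) (hr0 : 0 < r) (hr1 : r < 1) :
    (1 + x) ^ (r - 1) ≤ 1 + (r - 1) * x / 2 := by
  have hp : 0 < 1 + x := by linarith
  have h1 : (1 + x) ^ (r - 1) = (1 + -(x / (1 + x))) ^ (1 - r) := by
    have h2 : 1 + -(x / (1 + x)) = (1 + x)⁻¹ := by field_simp; ring
    rw [h2, Real.inv_rpow hp.le, ← Real.rpow_neg hp.le]
    congr 1; ring
  have h3 : x / (1 + x) ≤ 1 := by rw [div_le_one hp]; linarith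
  have h4 : x / 2 ≤ x / (1 + x) := by
    apply div_le_div_of_nonneg_left hx0.le hp; linarith
  have h5 := rpow_one_add_le_one_add_mul_self (s := -(x / (1 + x))) (by linarith)
    (p := 1 - r) (by linarith) (by linarith)
  rw [h1]
  nlinarith [mul_le_mul_of_nonneg_left h4 (by linarith : 0 ≤ 1 - r)]

/-- Bernoulli-type inequality: for all `x, r ∈ (0, 1)`,
`(1 + x)^r ≤ 1 + r·x + r·(r − 1)·x²/4`. -/
theorem bernoulli_type_inequality (x r : ℝ)
    (hx0 : 0 < x) (hx1 : x < 1) (hr0 : 0 < r) (hr1 : r < 1) :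
    (1 + x) ^ r ≤ 1 + r * x + r * (r - 1) * x ^ 2 / 4 := by
  have hd : ∀ y : ℝ, 0 ≤ y → HasDerivAt
      (fun y : ℝ => 1 + r * y + r * (r - 1) * y ^ 2 / 4 - (1 + y) ^ r)
      (r * (1 + (r - 1) * y / 2 - (1 + y) ^ (r - 1))) y := by
    intro y hy
    have a1 : HasDerivAt (fun y : ℝ => (1 + y) ^ r) (1 * r * (1 + y) ^ (r - 1)) y :=
      ((hasDerivAt_id y).const_add 1).rpow_const (Or.inl (by simp; linarith))
    have a2 := (((hasDerivAt_id y).const_mul r).const_add 1).add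
      ((((hasDerivAt_id y).pow 2).const_mul (r * (r - 1))).div_const 4)
    refine (a2.sub a1).congr_deriv ?_
    simp
    ring
  have hm : MonotoneOn
      (fun y : ℝ => 1 + r * y + r * (r - 1) * y ^ 2 / 4 - (1 + y) ^ r) (Set.Icc 0 1) := by
    apply monotoneOn_of_deriv_nonneg (convex_Icc 0 1)
    · intro y hy
      exact (hd y hy.1).continuousAt.continuousWithinAt
    · intro y hy
      rw [interior_Icc] at hy
      exact (hd y hy.1.le).differentiableAt.differentiableWithinAt
    · intro y hy
      rw [interior_Icc] at hy
      rw [(hd y hy.1.le).deriv]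
      have := bern_aux y r hy.1 hy.2 hr0 hr1
      exact mul_nonneg hr0.le (by linarith)
  have h := hm (a := 0) (b := x) (by simp) ⟨hx0.le, hx1.le⟩ hx0.le
  simp at h
  linarith
end

section
/- Let (X, 𝒜) be a measurable space, μ a probability measure on X, η : X → [0,1] measurable, and c ∈ (0,1). Then the infimum over all measurable r : X → ℝ of the rejection risk R₂(r) = ∫ C₂(r(x), η(x)) dμ(x) equals ∫ min{c, 1 − η(x)} dμ(x); in particular this infimum is attained by the measurable rejector r*(x) = η(x) − (1 − c), so the (ℓ₂, all-measurable-functions)-minimizability gap vanishes. -/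
open MeasureTheory

/-- The conditional risk of the induced rejection loss:
`C₂(t, η) = η·ℓ₂(t, +1) + (1 − η)·ℓ₂(t, −1)`. -/
noncomputable def condRiskInduced (c t η : ℝ) : ℝ :=
  η * inducedRejectionLoss c t 1 + (1 - η) * inducedRejectionLoss c t (-1)

theorem condRiskInduced_eq_ite (c t η : ℝ) :
    condRiskInduced c t η = if t ≤ 0 then c else 1 - η := by
  unfold condRiskInduced inducedRejectionLoss
  have h1 : ¬ ((1 : ℝ) = -1) := by norm_num
  by_cases h : t ≤ 0
  · have h' : ¬ 0 < t := not_lt.mpr h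
    simp only [h, h', h1, if_true, if_false]
    ring
  · have h' : 0 < t := not_le.mp h
    simp only [h, h', h1, if_true, if_false]
    ring

/-- the infimum of the rejection risk `R₂(r) = ∫ C₂(r(x), η(x)) dμ(x)`
over all measurable rejectors `r : X → ℝ` equals `∫ min{c, 1 − η(x)} dμ(x)`, and is
attained by the measurable rejector `r*(x) = η(x) − (1 − c)`: the minimizability gap
vanishes. -/
theorem rejection_risk_inf_attained {X : Type*} [MeasurableSpace X]
    (μ : Measure X) [IsProbabilityMeasure μ]
    (η : X → ℝ) (hη : Measurable η) (hη01 : ∀ x, η x ∈ Set.Icc (0 : ℝ) 1)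
    (c : ℝ) (hc : 0 < c) (hc1 : c < 1) :
    IsLeast {y : ℝ | ∃ r : X → ℝ, Measurable r ∧ y = ∫ x, condRiskInduced c (r x) (η x) ∂μ}
      (∫ x, min c (1 - η x) ∂μ) ∧
    (∫ x, condRiskInduced c (η x - (1 - c)) (η x) ∂μ) = ∫ x, min c (1 - η x) ∂μ := by
  have key : (∫ x, condRiskInduced c (η x - (1 - c)) (η x) ∂μ) = ∫ x, min c (1 - η x) ∂μ := by
    congr 1
    funext x
    rw [condRiskInduced_eq_ite]
    split_ifs with h
    · rw [min_eq_left (by linarith)]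
    · rw [min_eq_right (by linarith)]
  refine ⟨⟨⟨fun x => η x - (1 - c), hη.sub_const _, key.symm⟩, ?_⟩, key⟩
  rintro y ⟨r, hr, rfl⟩
  simp only [condRiskInduced_eq_ite]
  apply integral_mono
  · refine Integrable.of_bound (C := 1)
      (measurable_const.min (measurable_const.sub hη)).aestronglyMeasurable ?_
    refine Filter.Eventually.of_forall fun x => ?_
    obtain ⟨h0, h1⟩ := hη01 x
    rw [Real.norm_eq_abs, abs_le]
    exact ⟨by linarith [le_min hc.le (sub_nonneg.mpr h1)], (min_le_left _ _).trans hc1.le⟩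
  · refine Integrable.of_bound (C := 1)
      (Measurable.ite (measurableSet_le hr measurable_const) measurable_const
        (measurable_const.sub hη)).aestronglyMeasurable ?_
    refine Filter.Eventually.of_forall fun x => ?_
    obtain ⟨h0, h1⟩ := hη01 x
    rw [Real.norm_eq_abs, abs_le]
    split_ifs <;> constructor <;> linarith
  · intro x
    dsimp only
    split_ifs
    · exact min_le_left _ _
    · exact min_le_right _ _
end

section
/- Let (X, 𝒜) be a measurable space, μ a probability measure on X, η : X → [0,1] measurable, c ∈ (0,1) and α, β > 0. Then the infimum over all measurable r : X → ℝ of the surrogate risk R₁(r) = ∫ C₁(r(x), η(x)) dμ(x) equals ∫ (1/(1 − γ))·(2βc/α)^γ·I_{η(x)}^{1−γ} dμ(x), where γ = α/(α + 2β); in particular this infimum is attained by the measurable rejector r₀(x) = (2/(2β + α))·ln(2βc/(α·I_{η(x)})), so the (ℓ₁, all-measurable-functions)-minimizability gap vanishes. -/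
open MeasureTheory

lemma Ieta_pos_aux (α e : ℝ) (h : e ∈ Set.Icc (0 : ℝ) 1) : 0 < Ieta α e := by
  unfold Ieta
  obtain ⟨h0, h1⟩ := h
  have p1 := Real.exp_pos (-α / 2)
  have p2 := Real.exp_pos (α / 2)
  rcases h0.eq_or_lt with h | h
  · subst h; simpa using p2
  · have := mul_pos h p1
    have := mul_nonneg (sub_nonneg.2 h1) p2.le
    linarith

lemma condRisk_eq_aux (c α β t e : ℝ) :
    condRiskSurrogate c α β t e
      = Real.exp (α * t / 2) * Ieta α e + c * Real.exp (-β * t) := by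
  unfold condRiskSurrogate surrogateRejectionLoss Ieta
  have h1 : Real.exp (α * (t - 1) / 2) = Real.exp (α * t / 2) * Real.exp (-α / 2) := by
    rw [← Real.exp_add]; congr 1; ring
  have h2 : Real.exp (α * (t - -1) / 2) = Real.exp (α * t / 2) * Real.exp (α / 2) := by
    rw [← Real.exp_add]; congr 1; ring
  rw [h1, h2]; ring

lemma min_aux (c α β J : ℝ) (hc : 0 < c) (hα : 0 < α) (hβ : 0 < β) (hJ : 0 < J) :
    Real.exp (α * ((2 / (2 * β + α)) * Real.log (2 * β * c / (α * J))) / 2) * J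
      = (2 * β * c / α) ^ (α / (α + 2 * β)) * J ^ (1 - α / (α + 2 * β)) ∧
    c * Real.exp (-β * ((2 / (2 * β + α)) * Real.log (2 * β * c / (α * J))))
      = α / (2 * β) *
        ((2 * β * c / α) ^ (α / (α + 2 * β)) * J ^ (1 - α / (α + 2 * β))) := by
  have hK : 0 < 2 * β * c / α := by positivity
  have hs : α + 2 * β ≠ 0 := by positivity
  have hs' : 2 * β + α ≠ 0 := by positivity
  have hl : Real.log (2 * β * c / (α * J)) = Real.log (2 * β * c / α) - Real.log J := by
    rw [← Real.log_div hK.ne' hJ.ne', div_div]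
  have hcK : c = α / (2 * β) * Real.exp (Real.log (2 * β * c / α)) := by
    rw [Real.exp_log hK]; field_simp
  rw [hl, Real.rpow_def_of_pos hK, Real.rpow_def_of_pos hJ, ← Real.exp_add]
  generalize Real.log (2 * β * c / α) = k at *
  constructor
  · nth_rewrite 2 [← Real.exp_log hJ]
    rw [← Real.exp_add]; congr 1; field_simp; ring
  · rw [hcK, mul_assoc, ← Real.exp_add]; congr 2; field_simp; ring

lemma const_aux (α β : ℝ) (hα : 0 < α) (hβ : 0 < β) :
    1 / (1 - α / (α + 2 * β)) = 1 + α / (2 * β) := by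
  have hs : α + 2 * β ≠ 0 := by positivity
  have : 1 - α / (α + 2 * β) = 2 * β / (α + 2 * β) := by field_simp; ring
  rw [this]; field_simp; ring

lemma val_aux (c α β e : ℝ) (hc : 0 < c) (hα : 0 < α) (hβ : 0 < β)
    (he : e ∈ Set.Icc (0 : ℝ) 1) :
    condRiskSurrogate c α β
        ((2 / (2 * β + α)) * Real.log (2 * β * c / (α * Ieta α e))) e
      = (1 / (1 - α / (α + 2 * β))) *
        (2 * β * c / α) ^ (α / (α + 2 * β)) * Ieta α e ^ (1 - α / (α + 2 * β)) := by
  obtain ⟨h1, h2⟩ := min_aux c α β _ hc hα hβ (Ieta_pos_aux α e he)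
  rw [condRisk_eq_aux, h1, h2, const_aux α β hα hβ]; ring

lemma le_aux (c α β e t : ℝ) (hc : 0 < c) (hα : 0 < α) (hβ : 0 < β)
    (he : e ∈ Set.Icc (0 : ℝ) 1) :
    (1 / (1 - α / (α + 2 * β))) *
        (2 * β * c / α) ^ (α / (α + 2 * β)) * Ieta α e ^ (1 - α / (α + 2 * β))
      ≤ condRiskSurrogate c α β t e := by
  have hJ := Ieta_pos_aux α e he
  obtain ⟨h1, h2⟩ := min_aux c α β _ hc hα hβ hJ
  rw [condRisk_eq_aux, const_aux α β hα hβ, mul_assoc]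
  have hA : 0 < (2 * β * c / α) ^ (α / (α + 2 * β)) * Ieta α e ^ (1 - α / (α + 2 * β)) := by
    rw [← h1]; positivity
  generalize (2 * β * c / α) ^ (α / (α + 2 * β)) * Ieta α e ^ (1 - α / (α + 2 * β)) = A at *
  generalize (2 / (2 * β + α)) * Real.log (2 * β * c / (α * Ieta α e)) = u at *
  have e1 : Real.exp (α * t / 2) * Ieta α e = A * Real.exp (α * (t - u) / 2) := by
    rw [← h1, mul_right_comm, ← Real.exp_add]; congr 2; ring
  have e2 : c * Real.exp (-β * t) = α / (2 * β) * A * Real.exp (-β * (t - u)) := by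
    rw [← h2, mul_assoc, ← Real.exp_add]; congr 2; ring
  rw [e1, e2]
  have i1 := mul_le_mul_of_nonneg_left (Real.add_one_le_exp (α * (t - u) / 2)) hA.le
  have i2 := mul_le_mul_of_nonneg_left (Real.add_one_le_exp (-β * (t - u)))
    (show 0 ≤ α / (2 * β) * A by positivity)
  have i3 : A * (α * (t - u) / 2 + 1) + α / (2 * β) * A * (-β * (t - u) + 1)
      = (1 + α / (2 * β)) * A := by field_simp; ring
  linarith

/-- the infimum of the surrogate risk `R₁(r) = ∫ C₁(r(x), η(x)) dμ(x)`
over all measurable rejectors `r : X → ℝ` equals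
`∫ (1/(1 − γ))·(2βc/α)^γ·I_{η(x)}^{1−γ} dμ(x)` with `γ = α/(α + 2β)`, and is attained
by the measurable rejector `r₀(x) = (2/(2β + α))·ln(2βc/(α·I_{η(x)}))`: the
minimizability gap vanishes. (Risks are expressed as lower integrals of the
nonnegative losses, so that non-integrable rejectors have infinite risk.) -/
theorem surrogate_risk_inf_attained {X : Type*} [MeasurableSpace X]
    (μ : Measure X) [IsProbabilityMeasure μ]
    (η : X → ℝ) (hη : Measurable η) (hη01 : ∀ x, η x ∈ Set.Icc (0 : ℝ) 1)
    (c α β : ℝ) (hc : 0 < c) (hc1 : c < 1) (hα : 0 < α) (hβ : 0 < β) :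
    IsLeast {y : ENNReal | ∃ r : X → ℝ, Measurable r ∧
        y = ∫⁻ x, ENNReal.ofReal (condRiskSurrogate c α β (r x) (η x)) ∂μ}
      (∫⁻ x, ENNReal.ofReal ((1 / (1 - α / (α + 2 * β))) *
        (2 * β * c / α) ^ (α / (α + 2 * β)) *
        Ieta α (η x) ^ (1 - α / (α + 2 * β))) ∂μ) ∧
    (∫⁻ x, ENNReal.ofReal (condRiskSurrogate c α β
        ((2 / (2 * β + α)) * Real.log (2 * β * c / (α * Ieta α (η x)))) (η x)) ∂μ)
      = ∫⁻ x, ENNReal.ofReal ((1 / (1 - α / (α + 2 * β))) *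
          (2 * β * c / α) ^ (α / (α + 2 * β)) *
          Ieta α (η x) ^ (1 - α / (α + 2 * β))) ∂μ := by
  have hval : (∫⁻ x, ENNReal.ofReal (condRiskSurrogate c α β
        ((2 / (2 * β + α)) * Real.log (2 * β * c / (α * Ieta α (η x)))) (η x)) ∂μ)
      = ∫⁻ x, ENNReal.ofReal ((1 / (1 - α / (α + 2 * β))) *
          (2 * β * c / α) ^ (α / (α + 2 * β)) *
          Ieta α (η x) ^ (1 - α / (α + 2 * β))) ∂μ :=
    lintegral_congr fun x => by rw [val_aux c α β (η x) hc hα hβ (hη01 x)]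
  refine ⟨⟨⟨_, ?_, hval.symm⟩, ?_⟩, hval⟩
  · unfold Ieta
    fun_prop
  · rintro y ⟨r, -, rfl⟩
    exact lintegral_mono fun x =>
      ENNReal.ofReal_le_ofReal (le_aux c α β (η x) (r x) hc hα hβ (hη01 x))
end

section
/- Let c ∈ (0,1), α, β > 0, γ = α/(α + 2β), and suppose 2βc/α = Ī_c with Ī_c = c·exp(α/2) + (1 − c)·exp(−α/2). Then 1/(1 − γ) = (Ī_c + c)/Ī_c, and consequently for every η ∈ [0,1] the minimal conditional surrogate risk satisfies inf_{t ∈ ℝ} C₁(t, η) = (1/(1 − γ))·(2βc/α)^γ·I_η^{1−γ} = (Ī_c + c)·(I_η/Ī_c)^{1−γ}, where I_η = η·exp(−α/2) + (1 − η)·exp(α/2). -/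
/-- under the constraint `2βc/α = Ī_c`, with `γ = α/(α + 2β)` one has
`1/(1 − γ) = (Ī_c + c)/Ī_c`, and for every `η ∈ [0, 1]` the minimal conditional
surrogate risk satisfies
`inf_t C₁(t, η) = (1/(1 − γ))·(2βc/α)^γ·I_η^{1−γ} = (Ī_c + c)·(I_η/Ī_c)^{1−γ}`. -/
theorem minimal_cond_surrogate_risk_formula (c α β : ℝ)
    (hc : 0 < c) (hc1 : c < 1) (hα : 0 < α) (hβ : 0 < β)
    (hrel : 2 * β * c / α = Ibar c α) :
    (1 / (1 - α / (α + 2 * β)) = (Ibar c α + c) / Ibar c α) ∧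
    ∀ η ∈ Set.Icc (0 : ℝ) 1,
      sInf (Set.range fun t => condRiskSurrogate c α β t η)
        = (1 / (1 - α / (α + 2 * β))) * (2 * β * c / α) ^ (α / (α + 2 * β)) *
            Ieta α η ^ (1 - α / (α + 2 * β)) ∧
      sInf (Set.range fun t => condRiskSurrogate c α β t η)
        = (Ibar c α + c) * (Ieta α η / Ibar c α) ^ (1 - α / (α + 2 * β)) := by
  have hI : ∀ η ∈ Set.Icc (0 : ℝ) 1, 0 < Ieta α η := by
    rintro η ⟨h0, h1⟩
    unfold Ieta
    have e1 := Real.exp_pos (-α / 2)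
    have e2 := Real.exp_pos (α / 2)
    rcases h0.eq_or_lt with h | h
    · subst h; simpa using e2
    · have := mul_pos h e1
      have := mul_nonneg (sub_nonneg.2 h1) e2.le
      linarith
  have hB : 0 < Ibar c α := by rw [← hrel]; positivity
  have hfac : 1 / (1 - α / (α + 2 * β)) = (Ibar c α + c) / Ibar c α := by
    have h1 : 1 - α / (α + 2 * β) = 2 * β / (α + 2 * β) := by field_simp; ring
    rw [h1, ← hrel]
    field_simp
    ring
  refine ⟨hfac, fun η hη => ?_⟩
  have hIη := hI η hη
  rw [hfac, hrel]
  have hBα : Ibar c α * α = 2 * β * c := by rw [← hrel]; field_simp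
  have hC : ∀ t, condRiskSurrogate c α β t η
      = Real.exp (α * t / 2) * Ieta α η + c * Real.exp (-β * t) := by
    intro t
    unfold condRiskSurrogate surrogateRejectionLoss Ieta
    have h1 : α * (t - 1) / 2 = α * t / 2 + -α / 2 := by ring
    have h2 : α * (t - -1) / 2 = α * t / 2 + α / 2 := by ring
    rw [h1, h2, Real.exp_add, Real.exp_add]
    ring
  generalize Ibar c α = B at *
  generalize Ieta α η = J at *
  set γ := α / (α + 2 * β) with hγ
  set L := Real.log B - Real.log J with hL
  have hexpL : Real.exp (-L) = J / B := by
    rw [hL, neg_sub, Real.exp_sub, Real.exp_log hB, Real.exp_log hIη]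
  have e1 : α * (2 * L / (α + 2 * β)) / 2 = γ * L := by rw [hγ]; field_simp
  have e2 : -β * (2 * L / (α + 2 * β)) = γ * L + -L := by rw [hγ]; field_simp; ring
  have hmin : sInf (Set.range fun t => condRiskSurrogate c α β t η)
      = (B + c) / B * J * Real.exp (γ * L) := by
    apply IsLeast.csInf_eq
    constructor
    · refine ⟨2 * L / (α + 2 * β), ?_⟩
      simp only [hC]
      rw [e1, e2, Real.exp_add, hexpL]
      field_simp
    · rintro _ ⟨t, rfl⟩
      simp only [hC]
      obtain ⟨s, rfl⟩ : ∃ s, t = 2 * L / (α + 2 * β) + s := ⟨t - 2 * L / (α + 2 * β), by ring⟩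
      have f1 : α * (2 * L / (α + 2 * β) + s) / 2 = γ * L + α * s / 2 := by rw [← e1]; ring
      have f2 : -β * (2 * L / (α + 2 * β) + s) = γ * L + -L + -β * s := by rw [← e2]; ring
      rw [f1, f2, Real.exp_add, Real.exp_add, Real.exp_add, hexpL]
      have g1 := Real.add_one_le_exp (α * s / 2)
      have g2 := Real.add_one_le_exp (-β * s)
      have hE := Real.exp_pos (γ * L)
      generalize Real.exp (γ * L) = E at *
      calc (B + c) / B * J * E
          = E * J * (α * s / 2 + 1) + c * (E * (J / B)) * (-β * s + 1) := by
            field_simp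
            linear_combination (-s) * hBα
        _ ≤ E * J * Real.exp (α * s / 2) + c * (E * (J / B)) * Real.exp (-β * s) := by
            gcongr
        _ = _ := by ring
  rw [hmin]
  constructor
  · rw [Real.rpow_def_of_pos hB, Real.rpow_def_of_pos hIη, mul_assoc, mul_assoc, ← Real.exp_add]
    have : Real.log B * γ + Real.log J * (1 - γ) = Real.log J + γ * L := by rw [hL]; ring
    rw [this, Real.exp_add, Real.exp_log hIη]
  · rw [Real.rpow_def_of_pos (div_pos hIη hB), Real.log_div hIη.ne' hB.ne']
    have : (Real.log J - Real.log B) * (1 - γ) = γ * L + -L := by rw [hL]; ring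
    rw [this, Real.exp_add, hexpL]
    ring
end
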